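/- Assume the SOSC holds with respect to J. Fix a > 1, ε₀ > 0, and set b := max(2a, diam(J)/ε₀). Then for ν-almost every w ∈ W, writing x = π(w), the limit lim_{δ→0⁺} (1/ln(1/δ)) ∫_δ^{d(x,ℝ^d∖J)/b} ε^{−d} λ_d(F(ε) ∩ B(x,aε)) ε^{−1} dε exists, is finite, is independent of w, and equals (∑_{j=1}^N r_j^D ln(1/r_j))^{−1} · ∫_W ∫_{d(π(v),ℝ^d∖S_{v₁}(J))/b}^{d(π(v),ℝ^d∖J)/b} ε^{−d} λ_d(F(ε) ∩ B(π(v),aε)) ε^{−1} dε dν(v). -/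

import Mathlib

open MeasureTheory Metric Filter Set
open scoped ENNReal Topology

set_option linter.unusedSectionVars false
section Birkhoff
variable {Ω : Type*} [MeasurableSpace Ω]

noncomputable def maxB (T : Ω → Ω) (f : Ω → ℝ) : ℕ → Ω → ℝ
  | 0 => fun _ => 0
  | n + 1 => fun x => max 0 (f x + maxB T f n (T x))

lemma maxB_nonneg (T : Ω → Ω) (f : Ω → ℝ) (n : ℕ) (x : Ω) : 0 ≤ maxB T f n x := by
  cases n <;> simp [maxB]

lemma maxB_mono (T : Ω → Ω) (f : Ω → ℝ) (n : ℕ) : ∀ x, maxB T f n x ≤ maxB T f (n + 1) x := by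
  induction n with
  | zero => intro x; simp [maxB]
  | succ n ih =>
    intro x
    have := ih (T x)
    show max 0 (f x + maxB T f n (T x)) ≤ max 0 (f x + maxB T f (n + 1) (T x))
    gcongr

lemma maxB_ge (T : Ω → Ω) (f : Ω → ℝ) (n : ℕ) : ∀ x, birkhoffSum T f n x ≤ maxB T f n x := by
  induction n with
  | zero => intro x; simp [maxB]
  | succ n ih =>
    intro x
    rw [birkhoffSum_succ']
    have := ih (T x)
    exact le_trans (by linarith) (le_max_right 0 _)

lemma maxB_meas {T : Ω → Ω} {f : Ω → ℝ} (hT : Measurable T) (hf : Measurable f) (n : ℕ) :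
    Measurable (maxB T f n) := by
  induction n with
  | zero => exact measurable_const
  | succ n ih => exact measurable_const.max (hf.add (ih.comp hT))

lemma maxB_int {μ : Measure Ω} [IsProbabilityMeasure μ] {T : Ω → Ω} {f : Ω → ℝ}
    (hT : MeasurePreserving T μ μ) (hi : Integrable f μ) (n : ℕ) :
    Integrable (maxB T f n) μ := by
  induction n with
  | zero => exact integrable_zero _ _ _
  | succ n ih =>
    exact (integrable_zero Ω ℝ μ).sup (hi.add (hT.integrable_comp_of_integrable ih))

lemma birk_upper {μ : Measure Ω} [IsProbabilityMeasure μ] {T : Ω → Ω}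
    (hT : MeasurePreserving T μ μ)
    (herg : ∀ A, MeasurableSet A → T ⁻¹' A = A → μ A = 0 ∨ μ Aᶜ = 0)
    {f : Ω → ℝ} (hf : Measurable f) (hi : Integrable f μ) (hneg : ∫ x, f x ∂μ < 0) :
    ∀ᵐ x ∂μ, ∃ K : ℕ, ∀ n, birkhoffSum T f n x ≤ K := by
  set A : Set Ω := {x | ∀ K : ℕ, ∃ n, (K : ℝ) < maxB T f n x} with hA
  have hAm : MeasurableSet A := by
    have : A = ⋂ K : ℕ, ⋃ n, {x | (K : ℝ) < maxB T f n x} := by ext x; simp [hA]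
    rw [this]
    exact MeasurableSet.iInter fun K => MeasurableSet.iUnion fun n =>
      measurableSet_lt measurable_const (maxB_meas hT.measurable hf n)
  have hinv : T ⁻¹' A = A := by
    ext x
    simp only [hA, mem_preimage, mem_ofPred_eq]
    constructor
    · intro h K
      obtain ⟨k, hk⟩ := exists_nat_gt ((K : ℝ) - f x)
      obtain ⟨n, hn⟩ := h k
      refine ⟨n + 1, lt_of_lt_of_le ?_ (le_max_right 0 _)⟩
      linarith
    · intro h K
      obtain ⟨k, hk⟩ := exists_nat_gt ((K : ℝ) + |f x|)
      obtain ⟨n, hn⟩ := h k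
      cases n with
      | zero => simp only [maxB] at hn; exact absurd hn (not_lt.2 (Nat.cast_nonneg k))
      | succ n =>
        refine ⟨n, ?_⟩
        have h0 : (k : ℝ) < max 0 (f x + maxB T f n (T x)) := hn
        rcases lt_max_iff.1 h0 with h1 | h1
        · exact absurd h1 (not_lt.2 (Nat.cast_nonneg k))
        · have := le_abs_self (f x); linarith
  have hAz : μ A = 0 := by
    rcases herg A hAm hinv with h | h
    · exact h
    exfalso
    have hae : ∀ᵐ x ∂μ, x ∈ A := h
    have hlim : Tendsto (fun n => ∫ x, (maxB T f (n + 1) x - maxB T f n (T x)) ∂μ) atTop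
        (𝓝 (∫ x, f x ∂μ)) := by
      refine tendsto_integral_of_dominated_convergence (fun x => |f x|) ?_ hi.abs ?_ ?_
      · intro n
        exact ((maxB_meas hT.measurable hf (n + 1)).sub
          ((maxB_meas hT.measurable hf n).comp hT.measurable)).aestronglyMeasurable
      · intro n
        refine Eventually.of_forall fun x => ?_
        have h1 := maxB_nonneg T f n (T x)
        show |max 0 (f x + maxB T f n (T x)) - maxB T f n (T x)| ≤ |f x|
        rcases le_total 0 (f x + maxB T f n (T x)) with h2 | h2
        · rw [max_eq_right h2]; simp
        · rw [max_eq_left h2, abs_le]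
          have := neg_le_abs (f x)
          constructor <;> linarith
      · filter_upwards [hae] with x hx
        have hx' : x ∈ T ⁻¹' A := by rw [hinv]; exact hx
        obtain ⟨k, hk⟩ := exists_nat_gt (|f x|)
        obtain ⟨m, hm⟩ := hx' k
        apply tendsto_const_nhds.congr'
        filter_upwards [eventually_ge_atTop m] with n hn
        have hmono : maxB T f m (T x) ≤ maxB T f n (T x) :=
          monotone_nat_of_le_succ (f := fun n => maxB T f n (T x))
            (fun n => maxB_mono T f n (T x)) hn
        show f x = max 0 (f x + maxB T f n (T x)) - maxB T f n (T x)
        have := neg_le_abs (f x)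
        rw [max_eq_right (by linarith)]; ring
    have hge : ∀ n, 0 ≤ ∫ x, (maxB T f (n + 1) x - maxB T f n (T x)) ∂μ := by
      intro n
      have hc : Integrable (fun x => maxB T f n (T x)) μ :=
        hT.integrable_comp_of_integrable (maxB_int hT hi n)
      rw [integral_sub (maxB_int hT hi _) hc]
      have : ∫ x, maxB T f n (T x) ∂μ = ∫ x, maxB T f n x ∂μ := by
        have h3 := integral_map (μ := μ) (φ := T) hT.measurable.aemeasurable (f := maxB T f n)
          (maxB_meas hT.measurable hf n).aestronglyMeasurable
        rw [hT.map_eq] at h3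
        exact h3.symm
      rw [this, sub_nonneg]
      exact integral_mono (maxB_int hT hi _) (maxB_int hT hi _) (maxB_mono T f n)
    exact absurd (ge_of_tendsto' hlim hge) (not_le.2 hneg)
  have : ∀ᵐ x ∂μ, x ∉ A := measure_eq_zero_iff_ae_notMem.1 hAz
  filter_upwards [this] with x hx
  simp only [hA, mem_ofPred_eq, not_forall, not_exists, not_lt] at hx
  obtain ⟨K, hK⟩ := hx
  exact ⟨K, fun n => (maxB_ge T f n x).trans (hK n)⟩

lemma birk_half {μ : Measure Ω} [IsProbabilityMeasure μ] {T : Ω → Ω}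
    (hT : MeasurePreserving T μ μ)
    (herg : ∀ A, MeasurableSet A → T ⁻¹' A = A → μ A = 0 ∨ μ Aᶜ = 0)
    {f : Ω → ℝ} (hf : Measurable f) (hi : Integrable f μ) :
    ∀ᵐ x ∂μ, ∀ k : ℕ, ∀ᶠ n : ℕ in atTop,
      birkhoffSum T f n x / n ≤ ∫ x, f x ∂μ + 1 / ((k : ℝ) + 1) := by
  rw [ae_all_iff]
  intro k
  set e : ℝ := 1 / ((k : ℝ) + 1) with he
  have hepos : 0 < e := by positivity
  have := birk_upper hT herg (f := fun x => f x - (∫ x, f x ∂μ + e / 2))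
    (hf.sub measurable_const) (hi.sub (integrable_const _)) (by
      rw [integral_sub hi (integrable_const _)]; simp; linarith)
  filter_upwards [this] with x hx
  obtain ⟨K, hK⟩ := hx
  obtain ⟨m, hm⟩ := exists_nat_gt ((K : ℝ) / (e / 2))
  filter_upwards [eventually_gt_atTop m] with n hn
  have hn0 : (0 : ℝ) < n := by exact_mod_cast (Nat.zero_le m).trans_lt hn
  rw [div_le_iff₀ hn0]
  have h1 := hK n
  simp only [birkhoffSum, Finset.sum_sub_distrib, Finset.sum_const, Finset.card_range,
    nsmul_eq_mul] at h1 ⊢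
  rw [div_lt_iff₀ (by positivity)] at hm
  have h2 : (m : ℝ) * (e / 2) ≤ n * (e / 2) := by
    have : (m : ℝ) ≤ n := by exact_mod_cast hn.le
    gcongr
  nlinarith

theorem birk {μ : Measure Ω} [IsProbabilityMeasure μ] {T : Ω → Ω}
    (hT : MeasurePreserving T μ μ)
    (herg : ∀ A, MeasurableSet A → T ⁻¹' A = A → μ A = 0 ∨ μ Aᶜ = 0)
    {f : Ω → ℝ} (hf : Measurable f) (hi : Integrable f μ) :
    ∀ᵐ x ∂μ, Tendsto (fun n : ℕ => birkhoffSum T f n x / n) atTop (𝓝 (∫ x, f x ∂μ)) := by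
  filter_upwards [birk_half hT herg hf hi, birk_half hT herg hf.neg hi.neg] with x h1 h2
  rw [Metric.tendsto_nhds]
  intro e he
  obtain ⟨k, hk⟩ := exists_nat_one_div_lt he
  filter_upwards [h1 k, h2 k] with n g1 g2
  rw [birkhoffSum_neg, neg_div, ] at g2
  simp only [Pi.neg_apply, integral_neg] at g2
  rw [Real.dist_eq, abs_lt]
  constructor <;> linarith

end Birkhoff
section Shift
variable {N : ℕ}

def sh (w : ℕ → Fin N) : ℕ → Fin N := fun n => w (n + 1)

def Cyl (v : ℕ → Fin N) (n : ℕ) : Set (ℕ → Fin N) := {w | ∀ i < n, w i = v i}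

lemma sh_meas : Measurable (sh (N := N)) :=
  measurable_pi_lambda _ fun n => measurable_pi_apply (n + 1)

lemma sh_iter (m : ℕ) (w : ℕ → Fin N) (k : ℕ) : (sh^[m] w) k = w (k + m) := by
  induction m generalizing w with
  | zero => rfl
  | succ m ih => rw [Function.iterate_succ_apply, ih]; show w (k + m + 1) = _; rfl

lemma Cyl_meas (v : ℕ → Fin N) (n : ℕ) : MeasurableSet (Cyl v n) := by
  have : Cyl v n = ⋂ i, ⋂ (_ : i < n), (fun w : ℕ → Fin N => w i) ⁻¹' {v i} := by
    ext w; simp [Cyl]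
  rw [this]
  exact MeasurableSet.iInter fun i => MeasurableSet.iInter fun _ =>
    measurable_pi_apply i (measurableSet_singleton _)

lemma Cyl_pi : IsPiSystem {s : Set (ℕ → Fin N) | ∃ v n, s = Cyl v n} := by
  rintro _ ⟨v, n, rfl⟩ _ ⟨v', n', rfl⟩ ⟨w, hw, hw'⟩
  refine ⟨w, max n n', ?_⟩
  ext z
  simp only [Cyl, mem_inter_iff, mem_ofPred_eq, lt_max_iff] at *
  constructor
  · rintro ⟨h1, h2⟩ i (hi | hi)
    · rw [h1 i hi, hw i hi]
    · rw [h2 i hi, hw' i hi]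
  · intro h
    exact ⟨fun i hi => by rw [h i (Or.inl hi), hw i hi],
      fun i hi => by rw [h i (Or.inr hi), hw' i hi]⟩

lemma Cyl_gen : (inferInstance : MeasurableSpace (ℕ → Fin N)) =
    MeasurableSpace.generateFrom {s : Set (ℕ → Fin N) | ∃ v n, s = Cyl v n} := by
  apply le_antisymm
  · refine iSup_le fun k => ?_
    rw [← measurable_iff_comap_le]
    refine @measurable_to_countable' _ _ _ _ (MeasurableSpace.generateFrom _) _ ?_
    intro i
    have : (fun w : ℕ → Fin N => w k) ⁻¹' {i} =
        ⋃ u : Fin k → Fin N, Cyl (fun j => if h : j < k then u ⟨j, h⟩ else i) (k + 1) := by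
      ext w
      simp only [mem_preimage, mem_singleton_iff, mem_iUnion, Cyl, mem_ofPred_eq]
      constructor
      · intro h
        refine ⟨fun j => w j, fun j hj => ?_⟩
        by_cases hjk : j < k
        · simp [hjk]
        · have : j = k := by omega
          subst this; simp [h]
      · rintro ⟨u, hu⟩
        have := hu k (Nat.lt_succ_self k)
        simpa using this
    rw [this]
    refine MeasurableSet.iUnion fun u => ?_
    exact MeasurableSpace.measurableSet_generateFrom ⟨_, _, rfl⟩
  · apply MeasurableSpace.generateFrom_le
    rintro _ ⟨v, n, rfl⟩
    exact Cyl_meas v n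

variable {p : Fin N → ℝ≥0∞} {ν : Measure (ℕ → Fin N)} [IsProbabilityMeasure ν]

lemma ext_cyl {μ₁ μ₂ : Measure (ℕ → Fin N)} [IsFiniteMeasure μ₁]
    (hu : μ₁ univ = μ₂ univ)
    (h : ∀ v n, μ₁ (Cyl v n) = μ₂ (Cyl v n)) : μ₁ = μ₂ := by
  refine ext_of_generate_finite _ Cyl_gen Cyl_pi ?_ hu
  rintro _ ⟨v, n, rfl⟩
  exact h v n

lemma cyl_indep (hν : ∀ v n, ν (Cyl v n) = ∏ i ∈ Finset.range n, p (v i))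
    (v : ℕ → Fin N) (m : ℕ) {A : Set (ℕ → Fin N)} (hA : MeasurableSet A) :
    ν (Cyl v m ∩ sh^[m] ⁻¹' A) = ν (Cyl v m) * ν A := by
  have hsm : Measurable (sh (N := N))^[m] := sh_meas.iterate m
  have key : (ν.restrict (Cyl v m)).map (sh^[m]) = ν (Cyl v m) • ν := by
    apply ext_cyl
    · rw [Measure.map_apply hsm MeasurableSet.univ]
      simp
    · intro v' n
      rw [Measure.map_apply hsm (Cyl_meas _ _), Measure.restrict_apply (hsm (Cyl_meas _ _)),
        Measure.smul_apply, smul_eq_mul]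
      have : sh^[m] ⁻¹' Cyl v' n ∩ Cyl v m
          = Cyl (fun i => if i < m then v i else v' (i - m)) (m + n) := by
        ext w
        simp only [Cyl, mem_inter_iff, mem_preimage, mem_ofPred_eq, sh_iter]
        constructor
        · rintro ⟨h1, h2⟩ i hi
          by_cases him : i < m
          · simp [him, h2 i him]
          · simp only [him, if_false]
            rw [← h1 (i - m) (by omega)]; congr 1; omega
        · intro h
          refine ⟨fun i hi => ?_, fun i hi => ?_⟩
          · rw [h (i + m) (by omega)]; simp
          · rw [h i (by omega)]; simp [hi]
      rw [this, hν, hν, hν, Finset.prod_range_add]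
      congr 1
      · refine Finset.prod_congr rfl fun i hi => ?_
        simp [Finset.mem_range.1 hi]
      · refine Finset.prod_congr rfl fun i hi => ?_
        simp
  have := congrArg (fun μ => μ A) key
  simp only [Measure.map_apply hsm hA, Measure.restrict_apply (hsm hA), Measure.smul_apply,
    smul_eq_mul] at this
  rw [inter_comm]; exact this

lemma sh_mp (hν : ∀ v n, ν (Cyl v n) = ∏ i ∈ Finset.range n, p (v i)) (hp : ∑ i, p i = 1) :
    MeasurePreserving (sh (N := N)) ν ν := by
  refine ⟨sh_meas, ?_⟩
  ext A hA
  rw [Measure.map_apply sh_meas hA]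
  have hun : sh ⁻¹' A = ⋃ i : Fin N, (Cyl (fun _ => i) 1 ∩ sh^[1] ⁻¹' A) := by
    ext w; simp [Cyl]
  rw [hun, measure_iUnion]
  · simp only [cyl_indep hν _ _ hA]
    rw [tsum_fintype, ← Finset.sum_mul]
    simp [hν, hp]
  · intro i j hij
    refine Set.disjoint_left.2 ?_
    rintro w ⟨h1, -⟩ ⟨h2, -⟩
    exact hij ((h1 0 one_pos).symm.trans (h2 0 one_pos))
  · intro i
    exact (Cyl_meas _ _).inter ((sh_meas.iterate 1) hA)

lemma sh_erg (hν : ∀ v n, ν (Cyl v n) = ∏ i ∈ Finset.range n, p (v i))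
    (A : Set (ℕ → Fin N)) (hA : MeasurableSet A) (hinv : sh ⁻¹' A = A) :
    ν A = 0 ∨ ν Aᶜ = 0 := by
  have hm : ∀ m, sh^[m] ⁻¹' A = A := by
    intro m
    induction m with
    | zero => rfl
    | succ m ih => rw [Function.iterate_succ, preimage_comp, ih, hinv]
  have key : ν.restrict A = ν A • ν := by
    apply ext_cyl
    · simp
    · intro v n
      rw [Measure.restrict_apply (Cyl_meas _ _), Measure.smul_apply, smul_eq_mul, mul_comm,
        ← cyl_indep hν v n hA, hm]
  have h2 := congrArg (fun μ => μ A) key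
  simp only [Measure.restrict_apply hA, inter_self, Measure.smul_apply, smul_eq_mul] at h2
  by_cases h0 : ν A = 0
  · exact Or.inl h0
  right
  rw [prob_compl_eq_zero_iff hA]
  have := (ENNReal.mul_right_inj h0 (measure_ne_top ν A)).1 ((mul_one _).trans h2)
  exact this.symm

/-- integrability bootstrap -/
lemma boot (hν : ∀ v n, ν (Cyl v n) = ∏ i ∈ Finset.range n, p (v i)) (hp : ∑ i, p i = 1)
    (v : ℕ → Fin N) (m : ℕ) (hpos : ν (Cyl v m) ≠ 0)
    (φ : (ℕ → Fin N) → ℝ≥0∞) (hφ : Measurable φ) (A : ℝ≥0∞) (hA : A ≠ ⊤)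
    (h1 : ∀ w ∈ Cyl v m, φ w ≤ A) (h2 : ∀ w, φ w ≤ φ (sh^[m] w) + A) :
    ∫⁻ w, φ w ∂ν ≠ ⊤ := by
  set C := Cyl v m with hC
  have hCm : MeasurableSet C := Cyl_meas v m
  have hmp : MeasurePreserving (sh^[m]) ν ν := (sh_mp hν hp).iterate m
  have hmap : (ν.restrict Cᶜ).map (sh^[m]) = ν Cᶜ • ν := by
    ext B hB
    rw [Measure.map_apply hmp.measurable hB, Measure.restrict_apply (hmp.measurable hB),
      Measure.smul_apply, smul_eq_mul, ← sdiff_eq, ← sdiff_inter_self_eq_sdiff,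
      measure_sdiff inter_subset_right (hCm.inter (hmp.measurable hB)).nullMeasurableSet
        (measure_ne_top _ _), cyl_indep hν v m hB, hmp.measure_preimage hB.nullMeasurableSet,
      prob_compl_eq_one_sub hCm, ENNReal.sub_mul (fun _ _ => measure_ne_top _ _), one_mul]
  have bound : ∀ M : ℕ, ∫⁻ w, min (φ w) M ∂ν ≤ A / ν C := by
    intro M
    set ψ : (ℕ → Fin N) → ℝ≥0∞ := fun w => min (φ w) M with hψ
    have hψm : Measurable ψ := hφ.min measurable_const
    have hfin : ∫⁻ w, ψ w ∂ν ≠ ⊤ := by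
      have : ∫⁻ w, ψ w ∂ν ≤ ∫⁻ w, (M : ℝ≥0∞) ∂ν := lintegral_mono fun w => min_le_right _ _
      refine ne_top_of_le_ne_top ?_ this
      simp
    have e1 : ∫⁻ w in C, ψ w ∂ν ≤ A * ν C := by
      rw [← setLIntegral_const]
      exact setLIntegral_mono measurable_const fun w hw => (min_le_left _ _).trans (h1 w hw)
    have e2 : ∫⁻ w in Cᶜ, ψ w ∂ν ≤ ν Cᶜ * ∫⁻ w, ψ w ∂ν + A * ν Cᶜ := by
      calc ∫⁻ w in Cᶜ, ψ w ∂ν ≤ ∫⁻ w in Cᶜ, (ψ (sh^[m] w) + A) ∂ν := by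
            refine lintegral_mono fun w => ?_
            simp only [hψ]
            rcases le_total (φ (sh^[m] w)) M with h | h
            · rw [min_eq_left h]; exact (min_le_left _ _).trans (h2 w)
            · rw [min_eq_right h]; exact (min_le_right _ _).trans le_self_add
        _ = ∫⁻ w, ψ w ∂((ν.restrict Cᶜ).map (sh^[m])) + A * ν Cᶜ := by
            rw [lintegral_add_right _ measurable_const, setLIntegral_const,
              lintegral_map hψm hmp.measurable]
        _ = _ := by rw [hmap, lintegral_smul_measure, smul_eq_mul]
    have e3 : ∫⁻ w, ψ w ∂ν ≤ ν Cᶜ * ∫⁻ w, ψ w ∂ν + A := by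
      calc ∫⁻ w, ψ w ∂ν = ∫⁻ w in C, ψ w ∂ν + ∫⁻ w in Cᶜ, ψ w ∂ν :=
            (lintegral_add_compl _ hCm).symm
        _ ≤ A * ν C + (ν Cᶜ * ∫⁻ w, ψ w ∂ν + A * ν Cᶜ) := add_le_add e1 e2
        _ = ν Cᶜ * ∫⁻ w, ψ w ∂ν + A * (ν C + ν Cᶜ) := by ring
        _ = _ := by rw [prob_add_prob_compl hCm, mul_one]
    rw [ENNReal.le_div_iff_mul_le (Or.inl hpos) (Or.inl (measure_ne_top _ _))]
    have e4 : (∫⁻ w, ψ w ∂ν) * ν C + ν Cᶜ * ∫⁻ w, ψ w ∂ν ≤ A + ν Cᶜ * ∫⁻ w, ψ w ∂ν := by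
      calc _ = (∫⁻ w, ψ w ∂ν) * (ν C + ν Cᶜ) := by ring
        _ ≤ _ := by rw [prob_add_prob_compl hCm, mul_one, add_comm]; exact e3
    exact (ENNReal.add_le_add_iff_right (ENNReal.mul_ne_top (measure_ne_top _ _) hfin)).1 e4
  have hsup : ∫⁻ w, φ w ∂ν = ⨆ M : ℕ, ∫⁻ w, min (φ w) M ∂ν := by
    rw [← lintegral_iSup (fun M => hφ.min measurable_const)]
    · congr 1; ext w
      rw [← inf_iSup_eq (a := φ w), ENNReal.iSup_natCast, inf_top_eq]
    · intro M M' h w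
      exact min_le_min le_rfl (by exact_mod_cast h)
  rw [hsup]
  exact ne_top_of_le_ne_top (ENNReal.div_ne_top hA hpos) (iSup_le bound)

end Shift
lemma sandwich (I : ℝ → ℝ) (hI0 : ∀ s, 0 < s → 0 ≤ I s) (hI : ∀ s t, 0 < s → s ≤ t → I t ≤ I s)
    (δ : ℕ → ℝ) (hδ : ∀ n, 0 < δ n) (χ c : ℝ) (hχ : 0 < χ)
    (hL : Tendsto (fun n : ℕ => Real.log (δ n)⁻¹ / n) atTop (𝓝 χ))
    (hc : Tendsto (fun n : ℕ => I (δ n) / n) atTop (𝓝 c)) :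
    Tendsto (fun s => (Real.log s⁻¹)⁻¹ * I s) (𝓝[>] 0) (𝓝 (χ⁻¹ * c)) := by
  have hLt : Tendsto (fun n : ℕ => Real.log (δ n)⁻¹) atTop atTop := by
    have := hL.pos_mul_atTop hχ tendsto_natCast_atTop_atTop
    refine this.congr' ?_
    filter_upwards [eventually_gt_atTop 0] with n hn
    have : (n : ℝ) ≠ 0 := by positivity
    field_simp
  have hδ0 : ∀ s, 0 < s → ∃ n, δ n ≤ s := by
    intro s hs
    obtain ⟨n, hn⟩ := (hLt.eventually_ge_atTop (Real.log s⁻¹)).exists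
    refine ⟨n, ?_⟩
    have := (Real.log_le_log_iff (by positivity) (inv_pos.2 (hδ n))).1 hn
    exact (inv_le_inv₀ hs (hδ n)).1 this
  classical
  let m : ℝ → ℕ := fun s => if h : ∃ n, δ n ≤ s then Nat.find h else 0
  have hm1 : ∀ s, 0 < s → δ (m s) ≤ s := by
    intro s hs
    simp only [m, dif_pos (hδ0 s hs)]
    exact Nat.find_spec (hδ0 s hs)
  have hm2 : ∀ s, 0 < s → ∀ k < m s, s < δ k := by
    intro s hs k hk
    simp only [m, dif_pos (hδ0 s hs)] at hk
    exact not_le.1 (Nat.find_min (hδ0 s hs) hk)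
  have hmt : Tendsto m (𝓝[>] 0) atTop := by
    rw [Filter.tendsto_atTop]
    intro K
    have : ∀ k ∈ Finset.range K, ∀ᶠ s in 𝓝[>] (0 : ℝ), s < δ k := fun k _ =>
      nhdsWithin_le_nhds (Iio_mem_nhds (hδ k))
    filter_upwards [(Finset.eventually_all _).2 this, self_mem_nhdsWithin] with s hs hs0
    by_contra hlt
    exact absurd (hs (m s) (Finset.mem_range.2 (not_le.1 hlt))) (not_lt.2 (hm1 s hs0))
  have hmt' : Tendsto (fun s => m s - 1) (𝓝[>] 0) atTop := (tendsto_sub_atTop_nat 1).comp hmt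
  have hn1 : Tendsto (fun n : ℕ => ((n + 1 : ℕ) : ℝ) / n) atTop (𝓝 1) := by
    have : Tendsto (fun n : ℕ => 1 + 1 / (n : ℝ)) atTop (𝓝 (1 + 0)) :=
      tendsto_const_nhds.add tendsto_one_div_atTop_nhds_zero_nat
    rw [add_zero] at this
    refine this.congr' ?_
    filter_upwards [eventually_gt_atTop 0] with n hn
    have : (n : ℝ) ≠ 0 := by positivity
    push_cast; field_simp
  have hL1 := hL.comp (tendsto_add_atTop_nat 1)
  have hc1 := hc.comp (tendsto_add_atTop_nat 1)
  have low : Tendsto (fun n : ℕ => (Real.log (δ (n + 1))⁻¹)⁻¹ * I (δ n)) atTop (𝓝 (χ⁻¹ * c)) := by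
    have := ((hL1.mul hn1).inv₀ (by simpa using hχ.ne')).mul hc
    simp only [mul_one] at this
    refine this.congr' ?_
    filter_upwards [eventually_gt_atTop 0] with n hn
    have : (n : ℝ) ≠ 0 := by positivity
    have : ((n + 1 : ℕ) : ℝ) ≠ 0 := by positivity
    simp only [Function.comp]
    field_simp
  have up : Tendsto (fun n : ℕ => (Real.log (δ n)⁻¹)⁻¹ * I (δ (n + 1))) atTop (𝓝 (χ⁻¹ * c)) := by
    have := (hL.inv₀ hχ.ne').mul (hc1.mul hn1)
    simp only [mul_one] at this
    refine this.congr' ?_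
    filter_upwards [eventually_gt_atTop 0] with n hn
    have : (n : ℝ) ≠ 0 := by positivity
    have : ((n + 1 : ℕ) : ℝ) ≠ 0 := by positivity
    simp only [Function.comp]
    field_simp
  have hfacts : ∀ᶠ s in 𝓝[>] (0 : ℝ), 0 < s ∧ 1 ≤ m s ∧ 0 < Real.log (δ (m s - 1))⁻¹ := by
    filter_upwards [self_mem_nhdsWithin, hmt.eventually_ge_atTop 1,
      (hLt.comp hmt').eventually_gt_atTop 0] with s h1 h2 h3
    exact ⟨h1, h2, h3⟩
  refine tendsto_of_tendsto_of_tendsto_of_le_of_le' (low.comp hmt') (up.comp hmt') ?_ ?_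
  · filter_upwards [hfacts] with s ⟨h1, h2, h3⟩
    have e : m s - 1 + 1 = m s := by omega
    have hlt : s < δ (m s - 1) := hm2 s h1 _ (by omega)
    have hle := hm1 s h1
    simp only [Function.comp, e]
    have l1 : Real.log (δ (m s - 1))⁻¹ ≤ Real.log s⁻¹ :=
      Real.log_le_log (inv_pos.2 (hδ _)) ((inv_le_inv₀ (hδ _) h1).2 hlt.le)
    have l2 : Real.log s⁻¹ ≤ Real.log (δ (m s))⁻¹ :=
      Real.log_le_log (inv_pos.2 h1) ((inv_le_inv₀ h1 (hδ _)).2 hle)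
    have i1 := hI s _ h1 hlt.le
    exact mul_le_mul ((inv_le_inv₀ (by linarith) (by linarith)).2 l2) i1 (hI0 _ (hδ _))
      (inv_nonneg.2 (by linarith))
  · filter_upwards [hfacts] with s ⟨h1, h2, h3⟩
    have e : m s - 1 + 1 = m s := by omega
    have hlt : s < δ (m s - 1) := hm2 s h1 _ (by omega)
    have hle := hm1 s h1
    simp only [Function.comp, e]
    have l1 : Real.log (δ (m s - 1))⁻¹ ≤ Real.log s⁻¹ :=
      Real.log_le_log (inv_pos.2 (hδ _)) ((inv_le_inv₀ (hδ _) h1).2 hlt.le)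
    have i1 := hI _ s (hδ _) hle
    exact mul_le_mul ((inv_le_inv₀ (by linarith) (by linarith)).2 l1) i1 (hI0 _ h1)
      (inv_nonneg.2 (by linarith))
section Core
variable {N : ℕ}

noncomputable def dl (r : Fin N → ℝ) (ρ : (ℕ → Fin N) → ℝ) : ℕ → (ℕ → Fin N) → ℝ
  | 0 => ρ
  | n + 1 => fun w => r (w 0) * dl r ρ n (sh w)

lemma logint {p : Fin N → ℝ≥0∞} {ν : Measure (ℕ → Fin N)} [IsProbabilityMeasure ν]
    (hν : ∀ v n, ν (Cyl v n) = ∏ i ∈ Finset.range n, p (v i)) (hp : ∑ i, p i = 1)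
    (hp0 : ∀ i, p i ≠ 0)
    (r : Fin N → ℝ) (q : ℝ) (hq : 0 < q) (hqr : ∀ i, q ≤ r i)
    (ρ : (ℕ → Fin N) → ℝ) (hρm : Measurable ρ) (hρ0 : ∀ w, 0 ≤ ρ w)
    (R : ℝ) (hR : ∀ w, ρ w ≤ R)
    (h3 : ∀ w, r (w 0) * ρ (sh w) ≤ ρ w)
    (v : ℕ → Fin N) (m : ℕ) (c : ℝ) (hc : 0 < c) (hvc : ∀ w ∈ Cyl v m, c ≤ ρ w) :
    (∀ᵐ w ∂ν, 0 < ρ w) ∧ Integrable (fun w => Real.log (ρ w)) ν := by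
  set φ : (ℕ → Fin N) → ℝ≥0∞ := fun w => if ρ w = 0 then ⊤ else ENNReal.ofReal (-Real.log (ρ w))
    with hφ
  have hφm : Measurable φ := by
    refine Measurable.ite (hρm (measurableSet_singleton 0)) measurable_const ?_
    exact (Real.measurable_log.comp hρm).neg.ennreal_ofReal
  have hiter : ∀ (k : ℕ) w, q ^ k * ρ (sh^[k] w) ≤ ρ w := by
    intro k
    induction k with
    | zero => intro w; simp
    | succ k ih =>
      intro w
      rw [Function.iterate_succ_apply]
      calc q ^ (k + 1) * ρ (sh^[k] (sh w)) = q * (q ^ k * ρ (sh^[k] (sh w))) := by ring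
        _ ≤ q * ρ (sh w) := by gcongr; exact ih _
        _ ≤ r (w 0) * ρ (sh w) := mul_le_mul_of_nonneg_right (hqr _) (hρ0 _)
        _ ≤ ρ w := h3 w
  have hfin : ∫⁻ w, φ w ∂ν ≠ ⊤ := by
    refine boot hν hp v m ?_ φ hφm
      (ENNReal.ofReal (-Real.log c) + ENNReal.ofReal (-(m * Real.log q))) (by finiteness) ?_ ?_
    · rw [hν]; exact Finset.prod_ne_zero_iff.2 fun i _ => hp0 _
    · intro w hw
      have h := hvc w hw
      have h0 : ρ w ≠ 0 := by linarith
      simp only [hφ, if_neg h0]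
      refine le_trans (ENNReal.ofReal_le_ofReal ?_) le_self_add
      have := Real.log_le_log hc h
      linarith
    · intro w
      by_cases h0 : ρ (sh^[m] w) = 0
      · simp [hφ, h0]
      have hpos : 0 < ρ (sh^[m] w) := lt_of_le_of_ne (hρ0 _) (Ne.symm h0)
      have hle := hiter m w
      have hpos2 : 0 < q ^ m * ρ (sh^[m] w) := by positivity
      have hw0 : ρ w ≠ 0 := by linarith
      have hlog := Real.log_le_log hpos2 hle
      rw [Real.log_mul (by positivity) h0, Real.log_pow] at hlog
      simp only [hφ, if_neg h0, if_neg hw0]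
      calc ENNReal.ofReal (-Real.log (ρ w))
          ≤ ENNReal.ofReal (-Real.log (ρ (sh^[m] w)) + -(m * Real.log q)) :=
            ENNReal.ofReal_le_ofReal (by linarith)
        _ ≤ ENNReal.ofReal (-Real.log (ρ (sh^[m] w))) + ENNReal.ofReal (-(m * Real.log q)) :=
            ENNReal.ofReal_add_le
        _ ≤ _ := by gcongr; exact le_add_self
  have hae : ∀ᵐ w ∂ν, 0 < ρ w := by
    filter_upwards [ae_lt_top hφm hfin] with w hw
    refine lt_of_le_of_ne (hρ0 w) fun h => ?_
    simp [hφ, ← h] at hw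
  refine ⟨hae, ?_⟩
  have hφi : Integrable (fun w => (φ w).toReal + |Real.log R|) ν :=
    (integrable_toReal_of_lintegral_ne_top hφm.aemeasurable hfin).add (integrable_const _)
  refine hφi.mono' (Real.measurable_log.comp hρm).aestronglyMeasurable ?_
  filter_upwards [hae] with w hw
  simp only [hφ, if_neg hw.ne', Real.norm_eq_abs]
  rcases le_total 0 (Real.log (ρ w)) with h | h
  · rw [abs_of_nonneg h]
    have h1 := Real.log_le_log hw (hR w)
    have h2 := le_abs_self (Real.log R)
    have h3 : 0 ≤ (ENNReal.ofReal (-Real.log (ρ w))).toReal := ENNReal.toReal_nonneg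
    linarith
  · rw [abs_of_nonpos h, ENNReal.toReal_ofReal (by linarith)]
    have := abs_nonneg (Real.log R)
    linarith

lemma dl_pos {r : Fin N → ℝ} (hr : ∀ i, 0 < r i) {ρ : (ℕ → Fin N) → ℝ} (n : ℕ) :
    ∀ w, (∀ k, 0 < ρ (sh^[k] w)) → 0 < dl r ρ n w := by
  induction n with
  | zero => intro w h; exact h 0
  | succ n ih => intro w h; exact mul_pos (hr _) (ih (sh w) fun k => h (k + 1))

lemma dl_le {r : Fin N → ℝ} (hr : ∀ i, 0 < r i) {ρ : (ℕ → Fin N) → ℝ}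
    (h3 : ∀ w, r (w 0) * ρ (sh w) ≤ ρ w) (n : ℕ) :
    ∀ w, dl r ρ n w ≤ ρ w := by
  induction n with
  | zero => intro w; exact le_rfl
  | succ n ih => intro w; exact (mul_le_mul_of_nonneg_left (ih (sh w)) (hr _).le).trans (h3 w)

lemma dl_log {r : Fin N → ℝ} (hr : ∀ i, 0 < r i) {ρ : (ℕ → Fin N) → ℝ} (n : ℕ) :
    ∀ w, (∀ k, 0 < ρ (sh^[k] w)) → Real.log (dl r ρ n w)⁻¹ =
      birkhoffSum sh (fun w => Real.log (ρ w) - (Real.log (r (w 0)) + Real.log (ρ (sh w)))) n w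
        - Real.log (ρ w) := by
  induction n with
  | zero => intro w h; simp [dl]
  | succ n ih =>
    intro w h
    have h' : ∀ k, 0 < ρ (sh^[k] (sh w)) := fun k => h (k + 1)
    have := ih (sh w) h'
    rw [birkhoffSum_succ']
    show Real.log (r (w 0) * dl r ρ n (sh w))⁻¹ = _
    rw [Real.log_inv, Real.log_mul (hr _).ne' (dl_pos hr n _ h').ne']
    rw [Real.log_inv] at this
    linarith

lemma telesc {r : Fin N → ℝ} (hr : ∀ i, 0 < r i) {ρ : (ℕ → Fin N) → ℝ}
    (g : (ℕ → Fin N) → ℝ → ℝ)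
    (h1 : ∀ w ε, 0 < ε → ε ≤ r (w 0) * ρ (sh w) →
      g w ε = (r (w 0))⁻¹ * g (sh w) (ε / r (w 0)))
    (h2 : ∀ w s t, 0 < s → IntegrableOn (g w) (Ioc s t))
    (h3 : ∀ w, r (w 0) * ρ (sh w) ≤ ρ w) (n : ℕ) :
    ∀ w, (∀ k, 0 < ρ (sh^[k] w)) → ∫ ε in Ioc (dl r ρ n w) (ρ w), g w ε =
      birkhoffSum sh (fun w => ∫ ε in Ioc (r (w 0) * ρ (sh w)) (ρ w), g w ε) n w := by
  induction n with
  | zero => intro w h; simp [dl]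
  | succ n ih =>
    intro w h
    have h' : ∀ k, 0 < ρ (sh^[k] (sh w)) := fun k => h (k + 1)
    rw [birkhoffSum_succ', ← ih (sh w) h']
    have hri := hr (w 0)
    have hdp := dl_pos hr n _ h'
    have hle : dl r ρ n (sh w) ≤ ρ (sh w) := dl_le hr h3 n (sh w)
    have hle' : r (w 0) * dl r ρ n (sh w) ≤ r (w 0) * ρ (sh w) := by gcongr
    have hpos : 0 < r (w 0) * dl r ρ n (sh w) := by positivity
    show ∫ ε in Ioc (r (w 0) * dl r ρ n (sh w)) (ρ w), g w ε = _
    have hun : Ioc (r (w 0) * dl r ρ n (sh w)) (ρ w) =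
        Ioc (r (w 0) * dl r ρ n (sh w)) (r (w 0) * ρ (sh w)) ∪ Ioc (r (w 0) * ρ (sh w)) (ρ w) :=
      (Ioc_union_Ioc_eq_Ioc hle' (h3 w)).symm
    rw [hun, setIntegral_union (Ioc_disjoint_Ioc_of_le le_rfl) measurableSet_Ioc
      (h2 w _ _ hpos) (h2 w _ _ (hpos.trans_le hle')), add_comm]
    congr 1
    have e1 : ∫ ε in Ioc (r (w 0) * dl r ρ n (sh w)) (r (w 0) * ρ (sh w)), g w ε =
        ∫ ε in Ioc (r (w 0) * dl r ρ n (sh w)) (r (w 0) * ρ (sh w)),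
          (r (w 0))⁻¹ * g (sh w) (ε / r (w 0)) :=
      setIntegral_congr_fun measurableSet_Ioc fun ε hε => h1 w ε (hpos.trans hε.1) hε.2
    rw [e1, integral_const_mul, ← intervalIntegral.integral_of_le hle',
      intervalIntegral.integral_comp_div (f := g (sh w)) hri.ne',
      mul_div_cancel_left₀ _ hri.ne', mul_div_cancel_left₀ _ hri.ne',
      intervalIntegral.integral_of_le hle, smul_eq_mul, inv_mul_cancel_left₀ hri.ne']

theorem core {p : Fin N → ℝ≥0∞} {ν : Measure (ℕ → Fin N)} [IsProbabilityMeasure ν]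
    (hν : ∀ v n, ν (Cyl v n) = ∏ i ∈ Finset.range n, p (v i)) (hp : ∑ i, p i = 1)
    {r : Fin N → ℝ} (hr : ∀ i, r i ∈ Ioo (0 : ℝ) 1) {ρ : (ℕ → Fin N) → ℝ} (hρm : Measurable ρ)
    (hpos : ∀ᵐ w ∂ν, 0 < ρ w) (hint : Integrable (fun w => Real.log (ρ w)) ν)
    (g : (ℕ → Fin N) → ℝ → ℝ)
    (h1 : ∀ w ε, 0 < ε → ε ≤ r (w 0) * ρ (sh w) →
      g w ε = (r (w 0))⁻¹ * g (sh w) (ε / r (w 0)))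
    (h2 : ∀ w s t, 0 < s → IntegrableOn (g w) (Ioc s t))
    (h3 : ∀ w, r (w 0) * ρ (sh w) ≤ ρ w)
    (C : ℝ) (hg0 : ∀ w ε, 0 < ε → 0 ≤ g w ε) (hgC : ∀ w ε, 0 < ε → g w ε ≤ C * ε⁻¹)
    (hGm : Measurable (fun w => ∫ ε in Ioc (r (w 0) * ρ (sh w)) (ρ w), g w ε)) :
    ∀ᵐ w ∂ν, Tendsto (fun s => (Real.log s⁻¹)⁻¹ * ∫ ε in Ioc s (ρ w), g w ε) (𝓝[>] 0)
      (𝓝 ((∑ i, (p i).toReal * Real.log (r i)⁻¹)⁻¹ *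
        ∫ w, (∫ ε in Ioc (r (w 0) * ρ (sh w)) (ρ w), g w ε) ∂ν)) := by
  have hr0 : ∀ i, 0 < r i := fun i => (hr i).1
  have hmp := sh_mp hν hp
  have herg := sh_erg hν
  set H : (ℕ → Fin N) → ℝ :=
    fun w => Real.log (ρ w) - (Real.log (r (w 0)) + Real.log (ρ (sh w))) with hH
  set G : (ℕ → Fin N) → ℝ := fun w => ∫ ε in Ioc (r (w 0) * ρ (sh w)) (ρ w), g w ε with hG
  have hlm : Measurable fun w => Real.log (ρ w) := Real.measurable_log.comp hρm
  have hrm : Measurable fun w : ℕ → Fin N => Real.log (r (w 0)) :=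
    (measurable_of_countable fun i => Real.log (r i)).comp (measurable_pi_apply 0)
  have hrint : Integrable (fun w : ℕ → Fin N => Real.log (r (w 0))) ν := by
    have hb : ∃ B, ∀ i, |Real.log (r i)| ≤ B :=
      ⟨∑ j, |Real.log (r j)|, fun i => Finset.single_le_sum
        (f := fun j => |Real.log (r j)|) (fun j _ => abs_nonneg _) (Finset.mem_univ i)⟩
    obtain ⟨B, hB⟩ := hb
    exact Integrable.of_bound hrm.aestronglyMeasurable B (Eventually.of_forall fun w => hB _)
  have hshint : Integrable (fun w => Real.log (ρ (sh w))) ν :=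
    hmp.integrable_comp_of_integrable hint
  have hHm : Measurable H := hlm.sub (hrm.add (hlm.comp sh_meas))
  have hHi : Integrable H ν := hint.sub (hrint.add hshint)
  set χ : ℝ := ∑ i, (p i).toReal * Real.log (r i)⁻¹ with hχ
  have hp0 : ∀ i, ν.map (fun w => w 0) {i} = p i := by
    intro i
    rw [Measure.map_apply (measurable_pi_apply 0) (measurableSet_singleton _)]
    have := hν (fun _ => i) 1
    simp only [Finset.prod_range_one] at this
    rw [← this]; congr 1
    ext w; simp [Cyl]
  have hχH : ∫ w, H w ∂ν = χ := by
    have e1 : ∫ w, Real.log (ρ (sh w)) ∂ν = ∫ w, Real.log (ρ w) ∂ν := by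
      have h3 := integral_map (μ := ν) (φ := sh) hmp.measurable.aemeasurable
        (f := fun w => Real.log (ρ w)) hlm.aestronglyMeasurable
      rw [hmp.map_eq] at h3
      exact h3.symm
    have e2 : ∫ w, Real.log (r (w 0)) ∂ν = -χ := by
      have h3 := integral_map (μ := ν) (φ := fun w : ℕ → Fin N => w 0)
        (measurable_pi_apply 0).aemeasurable (f := fun i => Real.log (r i))
        (measurable_of_countable _).aestronglyMeasurable
      rw [← h3]
      have : IsProbabilityMeasure (ν.map (fun w : ℕ → Fin N => w 0)) :=
        Measure.isProbabilityMeasure_map (measurable_pi_apply 0).aemeasurable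
      rw [integral_fintype Integrable.of_finite]
      simp only [Measure.real, hp0, hχ, Real.log_inv, smul_eq_mul, mul_neg, Finset.sum_neg_distrib,
        neg_neg]
    have : ∫ w, H w ∂ν = ∫ w, Real.log (ρ w) ∂ν -
        (∫ w, Real.log (r (w 0)) ∂ν + ∫ w, Real.log (ρ (sh w)) ∂ν) := by
      have hadd : Integrable (fun w => Real.log (r (w 0)) + Real.log (ρ (sh w))) ν :=
        hrint.add hshint
      rw [← integral_add hrint hshint, ← integral_sub hint hadd]
    rw [this, e1, e2]; ring
  have hχpos : 0 < χ := by
    have hl : ∀ i, 0 < Real.log (r i)⁻¹ := fun i => by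
      rw [Real.log_inv]; have := Real.log_neg (hr i).1 (hr i).2; linarith
    have hnn : ∀ i ∈ Finset.univ, 0 ≤ (p i).toReal * Real.log (r i)⁻¹ :=
      fun i _ => mul_nonneg ENNReal.toReal_nonneg (hl i).le
    refine lt_of_le_of_ne (Finset.sum_nonneg hnn) fun h0 => ?_
    have hz := (Finset.sum_eq_zero_iff_of_nonneg hnn).1 h0.symm
    have : ∀ i, p i = 0 := by
      intro i
      have h5 := (mul_eq_zero.1 (hz i (Finset.mem_univ i))).resolve_right (hl i).ne'
      rcases (ENNReal.toReal_eq_zero_iff _).1 h5 with h6 | h6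
      · exact h6
      · exfalso
        have : p i ≤ 1 := hp ▸ Finset.single_le_sum (fun j _ => zero_le) (Finset.mem_univ i)
        rw [h6] at this; simp at this
    simp [this] at hp
  have hall : ∀ᵐ w ∂ν, ∀ k, 0 < ρ (sh^[k] w) :=
    ae_all_iff.2 fun k => (hmp.iterate k).quasiMeasurePreserving.ae hpos
  have hGi : Integrable G ν := by
    refine (hHi.const_mul C).mono' hGm.aestronglyMeasurable ?_
    filter_upwards [hall] with w hw
    have hw0 : 0 < ρ w := hw 0
    have hw1 : 0 < ρ (sh w) := hw 1
    have hs : 0 < r (w 0) * ρ (sh w) := mul_pos (hr0 _) hw1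
    rw [Real.norm_eq_abs, abs_of_nonneg]
    · have hii : IntegrableOn (fun ε : ℝ => C * ε⁻¹) (Ioc (r (w 0) * ρ (sh w)) (ρ w)) := by
        have h7 : ContinuousOn (fun ε : ℝ => C * ε⁻¹) (Icc (r (w 0) * ρ (sh w)) (ρ w)) :=
          continuousOn_const.mul (continuousOn_id.inv₀ fun x hx => (hs.trans_le hx.1).ne')
        exact h7.integrableOn_Icc.mono_set Ioc_subset_Icc_self
      calc G w ≤ ∫ ε in Ioc (r (w 0) * ρ (sh w)) (ρ w), C * ε⁻¹ :=
            setIntegral_mono_on (h2 w _ _ hs) hii measurableSet_Ioc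
              fun ε hε => hgC w ε (hs.trans hε.1)
        _ = C * H w := by
          rw [← intervalIntegral.integral_of_le (h3 w), intervalIntegral.integral_const_mul,
            integral_inv_of_pos hs hw0, Real.log_div hw0.ne' hs.ne',
            Real.log_mul (hr0 _).ne' hw1.ne']
    · exact setIntegral_nonneg measurableSet_Ioc fun ε hε => hg0 w ε (hs.trans hε.1)
  filter_upwards [hall, birk hmp herg hHm hHi, birk hmp herg hGm hGi] with w hw bH bG
  refine sandwich (fun s => ∫ ε in Ioc s (ρ w), g w ε) ?_ ?_ (fun n => dl r ρ n w)
    (fun n => dl_pos hr0 n w hw) χ _ hχpos ?_ ?_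
  · intro s hs
    exact setIntegral_nonneg measurableSet_Ioc fun ε hε => hg0 w ε (hs.trans hε.1)
  · intro s t hs hst
    refine setIntegral_mono_set (h2 w _ _ hs) ?_ (Ioc_subset_Ioc_left hst).eventuallyLE
    exact (ae_restrict_iff' measurableSet_Ioc).2
      (Eventually.of_forall fun ε hε => hg0 w ε (hs.trans hε.1))
  · rw [hχH] at bH
    have h0 : Tendsto (fun n : ℕ => Real.log (ρ w) / n) atTop (𝓝 0) :=
      tendsto_const_div_atTop_nhds_zero_nat _
    have := bH.sub h0
    rw [sub_zero] at this
    refine this.congr fun n => ?_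
    rw [dl_log hr0 n w hw, sub_div]
  · refine bG.congr fun n => ?_
    rw [telesc hr0 g h1 h2 h3 n w hw]

end Core
section Geom
open scoped Pointwise
variable {d : ℕ}

local notation "𝔼" => EuclideanSpace ℝ (Fin d)

lemma sim_struct {S : 𝔼 → 𝔼} {r : ℝ} (hr : 0 < r)
    (hS : ∀ x y, dist (S x) (S y) = r * dist x y) :
    ∃ e : 𝔼 ≃ₜ 𝔼, (∀ x, e x = S x) ∧
      (∀ X : Set 𝔼, volume (S '' X) = ENNReal.ofReal (r ^ d) * volume X) ∧
      (∀ x (B : Set 𝔼), infDist (S x) (S '' B) = r * infDist x B) := by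
  set A : 𝔼 → 𝔼 := fun x => r⁻¹ • S x with hA
  have hAi : Isometry A := by
    refine Isometry.of_dist_eq fun x y => ?_
    simp only [hA, dist_smul₀, hS, norm_inv, Real.norm_eq_abs, abs_of_pos hr]
    field_simp
  have hSA : ∀ x, S x = r • A x := fun x => by simp [hA, smul_smul, hr.ne']
  let aff := hAi.affineIsometryOfStrictConvexSpace
  let L : 𝔼 ≃ₗᵢ[ℝ] 𝔼 := aff.linearIsometry.toLinearIsometryEquiv rfl
  have hL : ∀ x, A x = L x + A 0 := by
    intro x
    have := aff.map_vadd 0 x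
    simpa [aff, L] using this
  have hSL : ∀ x, S x = r • L x + S 0 := by
    intro x
    rw [hSA x, hL x, smul_add, ← hSA 0]
  refine ⟨(L.toHomeomorph.trans (Homeomorph.smulOfNeZero r hr.ne')).trans
    (Homeomorph.addRight (S 0)), ?_, ?_, ?_⟩
  · intro x; rw [hSL x]; rfl
  · intro X
    have : S '' X = (fun x => x + S 0) '' (r • (L '' X)) := by
      rw [← image_smul, image_image, image_image]
      exact image_congr fun x _ => hSL x
    rw [this, image_add_right, measure_preimage_add_right, Measure.addHaar_smul]
    have h2 : volume (L '' X) = volume X := by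
      rw [L.image_eq_preimage_symm]
      exact L.symm.measurePreserving.measure_preimage_equiv (f := L.symm.toMeasurableEquiv) X
    rw [h2, abs_of_nonneg (by positivity)]
    simp
  · intro x B
    have : S '' B = r • (A '' B) := by
      rw [← image_smul, image_image]
      exact image_congr fun x _ => hSA x
    rw [this, hSA x, infDist_smul₀ hr.ne', infDist_image hAi, Real.norm_eq_abs, abs_of_pos hr]

noncomputable def gg (F : Set 𝔼) (a : ℝ) (x : 𝔼) (ε : ℝ) : ℝ :=
  ε ^ (-(d : ℝ)) * (volume (cthickening ε F ∩ closedBall x (a * ε))).toReal * ε⁻¹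

lemma gg_nonneg (F : Set 𝔼) (a : ℝ) (x : 𝔼) (ε : ℝ) (hε : 0 < ε) : 0 ≤ gg F a x ε := by
  unfold gg
  have : 0 ≤ (volume (cthickening ε F ∩ closedBall x (a * ε))).toReal := ENNReal.toReal_nonneg
  positivity

lemma gg_le (F : Set 𝔼) (a : ℝ) (ha : 0 < a) (x : 𝔼) (ε : ℝ) (hε : 0 < ε) :
    gg F a x ε ≤ (a ^ d * (volume (ball (0 : 𝔼) 1)).toReal) * ε⁻¹ := by
  unfold gg
  have h1 : (volume (cthickening ε F ∩ closedBall x (a * ε))).toReal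
      ≤ (a * ε) ^ d * (volume (ball (0 : 𝔼) 1)).toReal := by
    have h2 : volume (cthickening ε F ∩ closedBall x (a * ε)) ≤ volume (closedBall x (a * ε)) :=
      measure_mono inter_subset_right
    have h3 := ENNReal.toReal_mono (measure_closedBall_lt_top).ne h2
    rw [Measure.addHaar_closedBall _ _ (by positivity), ENNReal.toReal_mul,
      ENNReal.toReal_ofReal (by positivity)] at h3
    simpa using h3
  have h4 : ε ^ (-(d : ℝ)) * ((a * ε) ^ d * (volume (ball (0 : 𝔼) 1)).toReal) =
      a ^ d * (volume (ball (0 : 𝔼) 1)).toReal := by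
    rw [Real.rpow_neg hε.le, Real.rpow_natCast, mul_pow]
    field_simp
  rw [← h4]
  gcongr

lemma gg_meas (F : Set 𝔼) (a : ℝ) : Measurable (Function.uncurry (gg F a)) := by
  have hZ : MeasurableSet {z : (𝔼 × ℝ) × 𝔼 | infEDist z.2 F ≤ ENNReal.ofReal z.1.2 ∧
      dist z.2 z.1.1 ≤ a * z.1.2} := by
    apply IsClosed.measurableSet
    apply IsClosed.inter
    · exact isClosed_le (continuous_infEDist.comp continuous_snd)
        (ENNReal.continuous_ofReal.comp (continuous_snd.comp continuous_fst))
    · exact isClosed_le (continuous_snd.dist (continuous_fst.comp continuous_fst))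
        (continuous_const.mul (continuous_snd.comp continuous_fst))
  have hm := measurable_measure_prodMk_left (ν := (volume : Measure 𝔼)) hZ
  have h1 : Measurable fun z : 𝔼 × ℝ => z.2 ^ (-(d : ℝ)) := by fun_prop
  have h2 : Measurable fun z : 𝔼 × ℝ => (z.2)⁻¹ := by fun_prop
  exact (h1.mul hm.ennreal_toReal).mul h2

lemma gg_int (F : Set 𝔼) (a : ℝ) (ha : 0 < a) (x : 𝔼) (s t : ℝ) (hs : 0 < s) :
    IntegrableOn (gg F a x) (Ioc s t) := by
  have hc : ContinuousOn (fun ε : ℝ => (a ^ d * (volume (ball (0 : 𝔼) 1)).toReal) * ε⁻¹)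
      (Icc s t) :=
    continuousOn_const.mul (continuousOn_id.inv₀ fun x hx => (hs.trans_le hx.1).ne')
  have hi := hc.integrableOn_Icc.mono_set (μ := volume) (Ioc_subset_Icc_self)
  refine Integrable.mono' hi
    ((gg_meas F a).comp (measurable_const.prodMk measurable_id)).aestronglyMeasurable ?_
  refine (ae_restrict_iff' measurableSet_Ioc).2 (Eventually.of_forall fun ε hε => ?_)
  have hε0 := hs.trans hε.1
  show ‖gg F a x ε‖ ≤ _
  rw [Real.norm_eq_abs, abs_of_nonneg (gg_nonneg F a x ε hε0)]
  exact gg_le F a ha x ε hε0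

lemma gg_int_meas {Ω : Type*} [MeasurableSpace Ω] (F : Set 𝔼) (a : ℝ) {X : Ω → 𝔼}
    (hX : Measurable X) {lo hi : Ω → ℝ} (hlo : Measurable lo) (hhi : Measurable hi) :
    Measurable fun w => ∫ ε in Ioc (lo w) (hi w), gg F a (X w) ε := by
  have h1 : Measurable (Function.uncurry fun w ε => (Ioc (lo w) (hi w)).indicator (gg F a (X w)) ε) := by
    have h2 : (Function.uncurry fun w ε => (Ioc (lo w) (hi w)).indicator (gg F a (X w)) ε) =
        {z : Ω × ℝ | lo z.1 < z.2 ∧ z.2 ≤ hi z.1}.indicator (fun z => gg F a (X z.1) z.2) := by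
      ext z
      simp only [Function.uncurry, indicator, mem_Ioc, mem_ofPred_eq]
    rw [h2]
    refine Measurable.indicator ?_ ?_
    · exact (gg_meas F a).comp ((hX.comp measurable_fst).prodMk measurable_snd)
    · exact (measurableSet_lt (hlo.comp measurable_fst) measurable_snd).inter
        (measurableSet_le measurable_snd (hhi.comp measurable_fst))
  have h3 := (h1.stronglyMeasurable.integral_prod_right (ν := volume)).measurable
  have h4 : (fun w => ∫ ε in Ioc (lo w) (hi w), gg F a (X w) ε) =
      fun w => ∫ ε, (Ioc (lo w) (hi w)).indicator (gg F a (X w)) ε := by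
    ext w
    rw [integral_indicator measurableSet_Ioc]
  rw [h4]
  exact h3

lemma locality {N : ℕ} {S : Fin N → 𝔼 → 𝔼} {r : Fin N → ℝ} (hr : ∀ i, 0 < r i)
    (hS : ∀ i x y, dist (S i x) (S i y) = r i * dist x y)
    {F : Set 𝔼} (hF_cpt : IsCompact F) (hF_self : F = ⋃ i, S i '' F)
    {J : Set 𝔼} (hJ_reg : J = closure (interior J)) (hFJ : F ⊆ J)
    (hJ_disj : ∀ i j, i ≠ j → Disjoint (S i '' interior J) (S j '' interior J))
    {a b : ℝ} (ha : 1 < a) (hb : 2 * a ≤ b) (i : Fin N) (x : 𝔼) (ε : ℝ) (hε : 0 < ε)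
    (hεb : b * ε ≤ infDist (S i x) (S i '' J)ᶜ) :
    cthickening ε F ∩ closedBall (S i x) (a * ε) =
      S i '' (cthickening (ε / r i) F ∩ closedBall x (a * (ε / r i))) := by
  have hri := hr i
  choose e he _ using fun j => sim_struct (hr j) (hS j)
  have hSc : ∀ j, Continuous (S j) := fun j => by
    have : S j = e j := (funext (he j)).symm
    rw [this]; exact (e j).continuous
  have hSo : ∀ j, IsOpenMap (S j) := fun j => by
    have : S j = e j := (funext (he j)).symm
    rw [this]; exact (e j).isOpenMap
  have hSs : Function.Surjective (S i) := by
    have : S i = e i := (funext (he i)).symm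
    rw [this]; exact (e i).surjective
  have hJcl : ∀ j, S j '' J ⊆ closure (S j '' interior J) := fun j => by
    conv_lhs => rw [hJ_reg]
    exact image_closure_subset_closure_image (hSc j)
  rw [hF_cpt.cthickening_eq_biUnion_closedBall hε.le,
    hF_cpt.cthickening_eq_biUnion_closedBall (by positivity)]
  ext y
  simp only [mem_inter_iff, mem_iUnion, mem_closedBall, mem_image, exists_prop]
  constructor
  · rintro ⟨⟨z, hzF, hyz⟩, hyx⟩
    have hzU : z ∈ ball (S i x) (infDist (S i x) (S i '' J)ᶜ) := by
      rw [mem_ball]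
      have h1 := dist_triangle z y (S i x)
      rw [dist_comm z y] at h1
      have h2 : 2 * a * ε ≤ b * ε := by gcongr
      nlinarith
    have hzi : z ∈ S i '' F := by
      have hz2 := hzF
      rw [hF_self] at hz2
      obtain ⟨j, hj⟩ := mem_iUnion.1 hz2
      by_cases hij : i = j
      · rw [hij]; exact hj
      exfalso
      obtain ⟨y1, hy1U, hy1⟩ := mem_closure_iff.1 (hJcl j (image_mono hFJ hj)) _ isOpen_ball hzU
      obtain ⟨y2, hy2, hy2'⟩ := mem_closure_iff.1 (hJcl i (ball_infDist_compl_subset hy1U)) _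
        (hSo j _ isOpen_interior) hy1
      exact Set.disjoint_left.1 (hJ_disj i j hij) hy2' hy2
    obtain ⟨z', hz', rfl⟩ := hzi
    obtain ⟨y', rfl⟩ := hSs y
    refine ⟨y', ⟨⟨z', hz', ?_⟩, ?_⟩, rfl⟩
    · rw [hS] at hyz
      rw [le_div_iff₀ hri]; linarith
    · rw [hS] at hyx
      rw [← mul_div_assoc, le_div_iff₀ hri]; linarith
  · rintro ⟨y', ⟨⟨z', hz', hyz⟩, hyx⟩, rfl⟩
    refine ⟨⟨S i z', ?_, ?_⟩, ?_⟩
    · rw [hF_self]; exact mem_iUnion.2 ⟨i, mem_image_of_mem _ hz'⟩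
    · rw [hS]; rw [le_div_iff₀ hri] at hyz; linarith
    · rw [hS]; rw [← mul_div_assoc, le_div_iff₀ hri] at hyx; linarith

end Geom
/-- (Local Minkowski content density.) Under the SOSC with respect
to `J`, with `a > 1`, `ε₀ > 0` and `b := max(2a, diam(J)/ε₀)`, for `ν`-almost every
code `w` (with `x = π(w)`) the logarithmic Cesàro averages
`(1/ln(1/δ)) ∫_δ^{d(x,ℝ^d∖J)/b} ε^{-d} λ_d(F(ε) ∩ B(x,aε)) ε⁻¹ dε` converge, as
`δ → 0⁺`, to the constant
`(∑_j r_j^D ln(1/r_j))⁻¹ ∫_W ∫_{d(π v,ℝ^d∖S_{v₁}J)/b}^{d(π v,ℝ^d∖J)/b}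
ε^{-d} λ_d(F(ε) ∩ B(π v, aε)) ε⁻¹ dε dν(v)`. -/
theorem statement3 (d N : ℕ) (hd : 1 ≤ d) (hN : 2 ≤ N)
    (S : Fin N → EuclideanSpace ℝ (Fin d) → EuclideanSpace ℝ (Fin d))
    (r : Fin N → ℝ) (hr : ∀ i, r i ∈ Set.Ioo (0 : ℝ) 1)
    (hS : ∀ i x y, dist (S i x) (S i y) = r i * dist x y)
    (F : Set (EuclideanSpace ℝ (Fin d)))
    (hF_ne : F.Nonempty) (hF_cpt : IsCompact F)
    (hF_self : F = ⋃ i, S i '' F)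
    (D : ℝ) (hD : 0 < D) (hD_dim : ∑ i, r i ^ D = 1)
    (J : Set (EuclideanSpace ℝ (Fin d))) (hJ_cpt : IsCompact J)
    (hJ_reg : J = closure (interior J))
    (hJ_sub : ∀ i, S i '' J ⊆ J)
    (hJ_disj : ∀ i j, i ≠ j → Disjoint (S i '' interior J) (S j '' interior J))
    (hSOSC : (F ∩ interior J).Nonempty)
    (ν : Measure (ℕ → Fin N)) [IsProbabilityMeasure ν]
    (hν_cyl : ∀ (n : ℕ) (u : Fin n → Fin N),
      ν {w : ℕ → Fin N | ∀ i : Fin n, w i = u i} = ∏ i, ENNReal.ofReal (r (u i) ^ D))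
    (π : (ℕ → Fin N) → EuclideanSpace ℝ (Fin d))
    (hπ_mem : ∀ w, π w ∈ F)
    (hπ : ∀ w, π w = S (w 0) (π (fun n => w (n + 1))))
    (a ε₀ : ℝ) (ha : 1 < a) (hε₀ : 0 < ε₀)
    (b : ℝ) (hb : b = max (2 * a) (Metric.diam J / ε₀)) :
    ∀ᵐ w ∂ν,
      Tendsto (fun δ : ℝ => (Real.log δ⁻¹)⁻¹ *
          ∫ ε in Set.Ioc δ (Metric.infDist (π w) Jᶜ / b),
            ε ^ (-(d : ℝ)) *
              (volume (Metric.cthickening ε F ∩ Metric.closedBall (π w) (a * ε))).toReal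
              * ε⁻¹)
        (𝓝[>] 0)
        (𝓝 ((∑ j, r j ^ D * Real.log (r j)⁻¹)⁻¹ *
          ∫ v, (∫ ε in Set.Ioc (Metric.infDist (π v) ((S (v 0) '' J))ᶜ / b)
                  (Metric.infDist (π v) Jᶜ / b),
              ε ^ (-(d : ℝ)) *
                (volume (Metric.cthickening ε F
                  ∩ Metric.closedBall (π v) (a * ε))).toReal * ε⁻¹) ∂ν)) := by
  have hNe : Nonempty (Fin N) := ⟨⟨0, by omega⟩⟩
  have hdN : Nonempty (Fin d) := ⟨⟨0, by omega⟩⟩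
  have hr0 : ∀ i, 0 < r i := fun i => (hr i).1
  obtain ⟨imin, himin⟩ := Finite.exists_min r
  obtain ⟨imax, himax⟩ := Finite.exists_max r
  set q := r imax with hq
  have hq0 : 0 < q := hr0 _
  have hq1 : q < 1 := (hr imax).2
  have hb2 : 2 * a ≤ b := hb ▸ le_max_left _ _
  have hb0 : 0 < b := by linarith
  have hsh : ∀ w, π w = S (w 0) (π (sh w)) := hπ
  have hqlim : ∀ M c : ℝ, 0 < c → ∃ n : ℕ, q ^ n * M < c := by
    intro M c hc
    have h1 : Tendsto (fun n : ℕ => q ^ n * M) atTop (𝓝 (0 * M)) :=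
      (tendsto_pow_atTop_nhds_zero_of_lt_one hq0.le hq1).mul_const M
    rw [zero_mul] at h1
    exact (h1.eventually_lt_const hc).exists
  -- code map is contracting
  have hcontr : ∀ n : ℕ, ∀ w v, w ∈ Cyl v n → dist (π w) (π v) ≤ q ^ n * diam F := by
    intro n
    induction n with
    | zero =>
      intro w v _
      rw [pow_zero, one_mul]
      exact dist_le_diam_of_mem hF_cpt.isBounded (hπ_mem w) (hπ_mem v)
    | succ n ih =>
      intro w v hwv
      have h0 : w 0 = v 0 := hwv 0 (Nat.succ_pos n)
      have h1 := ih (sh w) (sh v) (fun i hi => hwv (i + 1) (by omega))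
      rw [hsh w, hsh v, h0, hS, pow_succ']
      calc r (v 0) * dist (π (sh w)) (π (sh v)) ≤ q * dist (π (sh w)) (π (sh v)) := by
            gcongr; exact himax _
        _ ≤ q * (q ^ n * diam F) := by gcongr
        _ = q * q ^ n * diam F := by ring
  have hcont : Continuous π := by
    rw [continuous_iff_continuousAt]
    intro v
    rw [ContinuousAt, Metric.tendsto_nhds]
    intro e he
    obtain ⟨n, hn⟩ := hqlim (diam F) e he
    have hopen : IsOpen (Cyl v n) := by
      have : Cyl v n = ⋂ i ∈ Finset.range n, (fun w : ℕ → Fin N => w i) ⁻¹' {v i} := by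
        ext w; simp [Cyl]
      rw [this]
      exact isOpen_biInter_finset fun i _ => (isOpen_discrete _).preimage (continuous_apply i)
    filter_upwards [hopen.mem_nhds (show v ∈ Cyl v n from fun _ _ => rfl)] with w hw
    exact (hcontr n w v hw).trans_lt hn
  have hπm : Measurable π := hcont.measurable
  have hdense : ∀ n : ℕ, ∀ x ∈ F, ∃ w, dist (π w) x ≤ q ^ n * diam F := by
    intro n
    induction n with
    | zero =>
      intro x hx
      refine ⟨fun _ => imax, ?_⟩
      rw [pow_zero, one_mul]
      exact dist_le_diam_of_mem hF_cpt.isBounded (hπ_mem _) hx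
    | succ n ih =>
      intro x hx
      rw [hF_self] at hx
      obtain ⟨i, y, hy, rfl⟩ := mem_iUnion.1 hx
      obtain ⟨w, hw⟩ := ih y hy
      refine ⟨fun k => Nat.casesOn k i w, ?_⟩
      have e : π (fun k => Nat.casesOn k i w) = S i (π w) := hπ _
      rw [e, hS, pow_succ']
      calc r i * dist (π w) y ≤ q * dist (π w) y := by gcongr; exact himax _
        _ ≤ q * (q ^ n * diam F) := by gcongr
        _ = q * q ^ n * diam F := by ring
  have hFJ : F ⊆ J := by
    obtain ⟨x0, hx0F, hx0⟩ := hSOSC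
    have hx0J : x0 ∈ J := interior_subset hx0
    have key : ∀ n : ℕ, ∀ x ∈ F, ∃ y ∈ J, dist x y ≤ q ^ n * diam F := by
      intro n
      induction n with
      | zero =>
        intro x hx
        exact ⟨x0, hx0J, by
          rw [pow_zero, one_mul]; exact dist_le_diam_of_mem hF_cpt.isBounded hx hx0F⟩
      | succ n ih =>
        intro x hx
        rw [hF_self] at hx
        obtain ⟨i, y, hy, rfl⟩ := mem_iUnion.1 hx
        obtain ⟨z, hz, hyz⟩ := ih y hy
        refine ⟨S i z, hJ_sub i (mem_image_of_mem _ hz), ?_⟩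
        rw [hS, pow_succ']
        calc r i * dist y z ≤ q * dist y z := by gcongr; exact himax _
          _ ≤ q * (q ^ n * diam F) := by gcongr
          _ = q * q ^ n * diam F := by ring
    intro x hx
    rw [← hJ_cpt.isClosed.closure_eq, Metric.mem_closure_iff]
    intro e he
    obtain ⟨n, hn⟩ := hqlim (diam F) e he
    obtain ⟨y, hy, hxy⟩ := key n x hx
    exact ⟨y, hy, hxy.trans_lt hn⟩
  have hJc : (Jᶜ).Nonempty := by
    have : NoncompactSpace (EuclideanSpace ℝ (Fin d)) := NormedSpace.noncompactSpace ℝ _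
    exact nonempty_compl.2 hJ_cpt.ne_univ
  set ρ : (ℕ → Fin N) → ℝ := fun w => infDist (π w) Jᶜ / b with hρ
  have hρm : Measurable ρ := ((continuous_infDist_pt _).measurable.comp hπm).div_const b
  have hlo : ∀ w, infDist (π w) (S (w 0) '' J)ᶜ / b = r (w 0) * ρ (sh w) := by
    intro w
    obtain ⟨e, he, -, hd⟩ := sim_struct (hr0 (w 0)) (hS (w 0))
    have hbij : Function.Bijective (S (w 0)) := by
      have : S (w 0) = e := (funext he).symm
      rw [this]; exact e.bijective
    rw [← image_compl_eq hbij, hsh w, hd, hρ]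
    simp only
    ring
  have h3 : ∀ w, r (w 0) * ρ (sh w) ≤ ρ w := by
    intro w
    rw [← hlo w]
    simp only [hρ]
    gcongr
    exact infDist_le_infDist_of_subset (compl_subset_compl.2 (hJ_sub _)) hJc
  have hν : ∀ v n, ν (Cyl v n) = ∏ i ∈ Finset.range n, ENNReal.ofReal (r (v i) ^ D) := by
    intro v n
    rw [Finset.prod_range, ← hν_cyl n (fun i => v i)]
    congr 1
    ext w
    simp only [Cyl, mem_ofPred_eq]
    exact ⟨fun h i => h i i.2, fun h i hi => h ⟨i, hi⟩⟩
  have hp : ∑ i, ENNReal.ofReal (r i ^ D) = 1 := by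
    rw [← ENNReal.ofReal_sum_of_nonneg (fun i _ => (Real.rpow_pos_of_pos (hr0 i) D).le), hD_dim,
      ENNReal.ofReal_one]
  have hp0 : ∀ i, ENNReal.ofReal (r i ^ D) ≠ 0 := fun i => by
    rw [Ne, ENNReal.ofReal_eq_zero, not_le]; exact Real.rpow_pos_of_pos (hr0 i) D
  obtain ⟨v, m, c, hc, hvc⟩ : ∃ (v : ℕ → Fin N) (m : ℕ) (c : ℝ), 0 < c ∧
      ∀ w ∈ Cyl v m, c ≤ ρ w := by
    obtain ⟨x0, hx0F, hx0⟩ := hSOSC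
    obtain ⟨e, he, hball⟩ := Metric.isOpen_iff.1 isOpen_interior x0 hx0
    obtain ⟨n, hn⟩ := hqlim (diam F) e he
    obtain ⟨v, hv⟩ := hdense n x0 hx0F
    have hvJ : π v ∈ interior J := hball (hv.trans_lt hn)
    have hpos : 0 < infDist (π v) Jᶜ := by
      rw [← infDist_pos_iff_notMem_closure hJc, closure_compl]
      exact fun h => h hvJ
    obtain ⟨m, hm⟩ := hqlim (diam F) (infDist (π v) Jᶜ / 2) (by positivity)
    refine ⟨v, m, infDist (π v) Jᶜ / 2 / b, by positivity, fun w hw => ?_⟩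
    have h5 := hcontr m w v hw
    have h6 := infDist_le_infDist_add_dist (s := Jᶜ) (x := π v) (y := π w)
    rw [dist_comm] at h6
    simp only [hρ]
    gcongr
    linarith
  obtain ⟨R, hR⟩ : ∃ R, ∀ w, ρ w ≤ R := by
    obtain ⟨y0, hy0⟩ := hJc
    obtain ⟨x0, hx0⟩ := hF_ne
    refine ⟨(diam F + dist x0 y0) / b, fun w => ?_⟩
    simp only [hρ]
    gcongr
    calc infDist (π w) Jᶜ ≤ dist (π w) y0 := infDist_le_dist_of_mem hy0
      _ ≤ dist (π w) x0 + dist x0 y0 := dist_triangle _ _ _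
      _ ≤ _ := by gcongr; exact dist_le_diam_of_mem hF_cpt.isBounded (hπ_mem w) hx0
  obtain ⟨hpos, hint⟩ := logint hν hp hp0 r (r imin) (hr0 _) himin ρ hρm
    (fun w => div_nonneg infDist_nonneg hb0.le) R hR h3 v m c hc hvc
  have hrm : Measurable fun w : ℕ → Fin N => r (w 0) :=
    (measurable_of_countable r).comp (measurable_pi_apply 0)
  have main := core hν hp hr hρm hpos hint (fun w ε => gg F a (π w) ε) ?_
    (fun w s t hs => gg_int F a (by linarith) (π w) s t hs) h3
    (a ^ d * (volume (ball (0 : EuclideanSpace ℝ (Fin d)) 1)).toReal)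
    (fun w ε hε => gg_nonneg F a (π w) ε hε)
    (fun w ε hε => gg_le F a (by linarith) (π w) ε hε)
    (gg_int_meas F a hπm (hrm.mul (hρm.comp sh_meas)) hρm)
  · filter_upwards [main] with w hw
    simp only [hlo]
    simp only [ENNReal.toReal_ofReal (Real.rpow_pos_of_pos (hr0 _) D).le] at hw
    exact hw
  · intro w ε hε hle
    have hri := hr0 (w 0)
    rw [← hlo w, hsh w, le_div_iff₀ hb0] at hle
    have hloc := locality hr0 hS hF_cpt hF_self hJ_reg hFJ hJ_disj ha hb2 (w 0) (π (sh w)) ε hε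
      (by linarith)
    obtain ⟨-, -, hvol, -⟩ := sim_struct hri (hS (w 0))
    show gg F a (π w) ε = _
    rw [hsh w]
    unfold gg
    rw [hloc, hvol, ENNReal.toReal_mul, ENNReal.toReal_ofReal (by positivity),
      Real.rpow_neg hε.le, Real.rpow_neg (by positivity), Real.rpow_natCast, Real.rpow_natCast,
      div_pow]
    field_simp
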